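/- Let q, a be nonzero complex numbers such that q^m ≠ 1, a q^m ≠ 1, and a^3 q^{3m} ≠ 1 for all m ≥ 1 (so that all denominators below are nonzero). Suppose (α_n, β_n) is a Bailey pair with parameters (a^3, q^3). Define α'_r = a^{-r} q^{-r^2} α_r and β'_n = (1/(aq;q)_{2n}) · ∑_{k=0}^{n} [(a q^{2n+1}; q^{-1})_{3k} (a^3 q^3;q^3)_{2(n-k)} / (q^3;q^3)_k] · (-1)^k q^{3k(k-1)/2 - n^2} a^{-n} β_{n-k}, where (a q^{2n+1}; q^{-1})_{3k} = ∏_{j=0}^{3k-1}(1 - a q^{2n+1-j}). Then (α'_n, β'_n) is a Bailey pair with parameters (a, q). -/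

import Mathlib

/-- The finite q-Pochhammer symbol `(x;q)_n = ∏_{j=0}^{n-1} (1 - x q^j)`. -/
noncomputable def qPoch (x q : ℂ) (n : ℕ) : ℂ := ∏ j ∈ Finset.range n, (1 - x * q ^ j)

/-- `(α, β)` is a Bailey pair with parameters `(a, q)`. -/
def IsBaileyPair (a q : ℂ) (α β : ℕ → ℂ) : Prop :=
  ∀ n : ℕ, β n = ∑ r ∈ Finset.range (n + 1), α r / (qPoch q q (n - r) * qPoch (a * q) q (n + r))

/-!
Interchanging the two summations shows that the theorem amounts to the terminating sum
`cubic_summation`, applied with `b = a q^{2r}`. To prove the latter, factor `(x³;q³)_m` over the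
cube roots of unity as `(x;q)_m (ωx;q)_m (ω²x;q)_m`; the q-Saalschütz summation with
`A = ω q^{-m}`, `B = ω² q^{-m}` then expands `((b q^{m+1})³;q³)_m / (q³;q³)_m` into products
`(b q^{j+1};q)_{3m-2j}`. After a second interchange the inner sum over `k + l = m` is an `m`-th
`q³`-difference of a polynomial of degree `m - 1`, so it vanishes unless `m = 0`, and a single
term survives.
-/

section

open Finset Polynomial

variable {q : ℂ}

theorem qPoch_zero (x q : ℂ) : qPoch x q 0 = 1 :=
  prod_range_zero _

theorem qPoch_succ (x q : ℂ) (n : ℕ) :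
    qPoch x q (n + 1) = qPoch x q n * (1 - x * q ^ n) :=
  prod_range_succ _ _

theorem qPoch_add (x q : ℂ) (m n : ℕ) :
    qPoch x q (m + n) = qPoch x q m * qPoch (x * q ^ m) q n := by
  simp only [qPoch, prod_range_add, pow_add, mul_assoc]

theorem qPoch_succ_left (x q : ℂ) (n : ℕ) :
    qPoch x q (n + 1) = (1 - x) * qPoch (x * q) q n := by
  rw [add_comm, qPoch_add, qPoch_succ, qPoch_zero, pow_zero, pow_one, mul_one, one_mul]

theorem qPoch_ne_zero {x : ℂ} (h : ∀ m : ℕ, x * q ^ m ≠ 1) (n : ℕ) : qPoch x q n ≠ 0 :=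
  prod_ne_zero_iff.mpr fun i _ => sub_ne_zero.mpr (h i).symm

theorem qPoch_self_ne_zero (hq1 : ∀ m : ℕ, 1 ≤ m → q ^ m ≠ 1) (n : ℕ) : qPoch q q n ≠ 0 :=
  qPoch_ne_zero (fun m => by simpa only [pow_succ'] using hq1 (m + 1) m.succ_pos) n

theorem qPoch_mul_self_ne_zero {x : ℂ} (hx : ∀ m : ℕ, 1 ≤ m → x * q ^ m ≠ 1) (n : ℕ) :
    qPoch (x * q) q n ≠ 0 :=
  qPoch_ne_zero (fun m => by simpa only [pow_succ', mul_assoc] using hx (m + 1) m.succ_pos) n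

theorem one_sub_self_mul_pow_ne_zero (hq1 : ∀ m : ℕ, 1 ≤ m → q ^ m ≠ 1) (n : ℕ) :
    1 - q * q ^ n ≠ 0 := by
  rw [← pow_succ']
  exact sub_ne_zero.mpr (hq1 (n + 1) n.succ_pos).symm

theorem qPoch_cube {ω : ℂ} (hω : 1 + ω + ω ^ 2 = 0) (x q : ℂ) (n : ℕ) :
    qPoch (x ^ 3) (q ^ 3) n = qPoch x q n * qPoch (ω * x) q n * qPoch (ω ^ 2 * x) q n := by
  simp only [qPoch, ← prod_mul_distrib]
  refine prod_congr rfl fun j _ => ?_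
  linear_combination (x * q ^ j - ω * (x * q ^ j) ^ 2 + (ω - 1) * (x * q ^ j) ^ 3) * hω

theorem qPoch_inv_base (hq : q ≠ 0) (x : ℂ) (n : ℕ) :
    qPoch x q⁻¹ n = qPoch (x * q / q ^ n) q n := by
  induction n with
  | zero => rw [qPoch_zero, qPoch_zero]
  | succ n ih =>
    have hshift : x * q / q ^ (n + 1) * q = x * q / q ^ n := by field_simp; ring
    have hfactor : x * q / q ^ (n + 1) = x * q⁻¹ ^ n := by
      rw [pow_succ, mul_div_mul_right _ _ hq, inv_pow, div_eq_mul_inv]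
    rw [qPoch_succ, ih, qPoch_succ_left, hshift, hfactor, mul_comm]

theorem qPoch_inv_pow_eq_zero (hq : q ≠ 0) {d n : ℕ} (h : d < n) : qPoch (q ^ d)⁻¹ q n = 0 :=
  prod_eq_zero (mem_range.mpr h) (by rw [inv_mul_cancel₀ (pow_ne_zero d hq), sub_self])

theorem qPoch_inv_pow_mul (hq : q ≠ 0) (k l : ℕ) :
    qPoch (q ^ (k + l))⁻¹ q k * q ^ (k * (k + l)) * qPoch q q l =
      (-1) ^ k * q ^ k.choose 2 * qPoch q q (k + l) := by
  induction k with
  | zero => simp [qPoch_zero]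
  | succ k ih =>
    have hshift : (q ^ (k + 1 + l))⁻¹ * q = (q ^ (k + l))⁻¹ := by field_simp; ring
    have hfactor : (1 - (q ^ (k + 1 + l))⁻¹) * q ^ (k + 1 + l) = -(1 - q * q ^ (k + l)) := by
      field_simp
      ring
    have hpow : q ^ ((k + 1) * (k + 1 + l)) = q ^ (k * (k + l)) * q ^ k * q ^ (k + 1 + l) := by
      ring
    have hQ : qPoch q q (k + 1 + l) = qPoch q q (k + l) * (1 - q * q ^ (k + l)) := by
      rw [add_right_comm, qPoch_succ]
    have hchoose : q ^ (k + 1).choose 2 = q ^ k * q ^ k.choose 2 := by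
      rw [Nat.choose_succ_succ' k 1, Nat.choose_one_right, pow_add]
    rw [qPoch_succ_left, hshift, hpow, hQ, hchoose, pow_succ]
    generalize qPoch (q ^ (k + l))⁻¹ q k = Q at ih ⊢
    linear_combination (-1 : ℂ) * q ^ k * (1 - q * q ^ (k + l)) * ih +
      Q * q ^ (k * (k + l)) * q ^ k * qPoch q q l * hfactor

-- With `z = x q ^ e`, `e ∈ ℤ`, both sides collect the exponents of two intervals, which have
-- exchanged their upper ends: `[e, e + i)` and `[0, t)` on the left, `[0, u)` and `[e, e + r)` on
-- the right.
theorem qPoch_mul_qPoch_swap (hq : q ≠ 0) {x z : ℂ} {i t u r : ℕ}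
    (hz : z * q ^ i = x * q ^ u) (h : t + i = u + r) :
    qPoch z q i * qPoch x q t = qPoch x q u * qPoch z q r := by
  rcases le_total r i with hri | hir
  · obtain ⟨d, rfl⟩ := Nat.exists_eq_add_of_le hri
    obtain rfl : u = t + d := by omega
    have hzx : z * q ^ r = x * q ^ t := by
      apply mul_right_cancel₀ (pow_ne_zero d hq)
      rw [mul_assoc, mul_assoc, ← pow_add, ← pow_add, hz]
    rw [qPoch_add, qPoch_add, hzx]
    ring
  · obtain ⟨d, rfl⟩ := Nat.exists_eq_add_of_le hir
    obtain rfl : t = u + d := by omega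
    rw [qPoch_add, qPoch_add, hz]
    ring

theorem sum_antidiagonal_succ_of_pascal {M : Type*} [AddCommMonoid M] {F P S : ℕ → ℕ → M} {n : ℕ}
    (hleft : F 0 (n + 1) = P 0 n) (hright : F (n + 1) 0 = S n 0)
    (hmid : ∀ i j, i + 1 + j = n → F (i + 1) (j + 1) = P (i + 1) j + S i (j + 1)) :
    ∑ p ∈ antidiagonal (n + 1), F p.1 p.2 = ∑ p ∈ antidiagonal n, (P p.1 p.2 + S p.1 p.2) := by
  rw [Nat.sum_antidiagonal_succ, sum_add_distrib, hleft]
  cases n with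
  | zero => simp [hright]
  | succ n =>
    rw [Nat.sum_antidiagonal_succ', hright, Nat.sum_antidiagonal_succ (f := fun p => P p.1 p.2),
      Nat.sum_antidiagonal_succ' (f := fun p => S p.1 p.2)]
    rw [sum_congr rfl fun p hp => hmid p.1 p.2 <| by
        rw [← HasAntidiagonal.mem_antidiagonal.mp hp, add_right_comm], sum_add_distrib]
    abel

theorem sum_antidiagonal_left_comm {M : Type*} [AddCommMonoid M] (f : ℕ → ℕ → ℕ → M) (n : ℕ) :
    ∑ p ∈ antidiagonal n, ∑ s ∈ antidiagonal p.2, f p.1 s.1 s.2 =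
      ∑ p ∈ antidiagonal n, ∑ s ∈ antidiagonal p.2, f s.1 p.1 s.2 := by
  rw [sum_sigma', sum_sigma']
  refine sum_nbij' (fun t => ⟨(t.2.1, t.1.1 + t.2.2), (t.1.1, t.2.2)⟩)
    (fun t => ⟨(t.2.1, t.1.1 + t.2.2), (t.1.1, t.2.2)⟩) ?_ ?_ ?_ ?_ ?_ <;>
  · rintro ⟨⟨k, m⟩, j, l⟩ h
    simp only [mem_sigma, HasAntidiagonal.mem_antidiagonal] at h
    obtain ⟨rfl, rfl⟩ := h
    simp [add_left_comm]

theorem q_binomial (hq1 : ∀ m : ℕ, 1 ≤ m → q ^ m ≠ 1) (x : ℂ) (n : ℕ) :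
    ∑ p ∈ antidiagonal n, (-1) ^ p.1 * q ^ p.1.choose 2 * x ^ p.1 /
      (qPoch q q p.1 * qPoch q q p.2) = qPoch x q n / qPoch q q n := by
  induction n generalizing x with
  | zero => simp [qPoch_zero]
  | succ n ih =>
    set T : ℂ → ℕ → ℕ → ℂ := fun y i j =>
      (-1) ^ i * q ^ i.choose 2 * y ^ i / (qPoch q q i * qPoch q q j) with hT
    have hP := qPoch_self_ne_zero hq1
    have hne (m : ℕ) : 1 - q * q ^ m ≠ 0 := one_sub_self_mul_pow_ne_zero hq1 m
    have hrec : ∑ p ∈ antidiagonal (n + 1), (1 - q * q ^ n) * T x p.1 p.2 =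
        ∑ p ∈ antidiagonal n, (T (x * q) p.1 p.2 + -x * T (x * q) p.1 p.2) := by
      refine sum_antidiagonal_succ_of_pascal (F := fun i j => (1 - q * q ^ n) * T x i j)
        (P := T (x * q)) (S := fun i j => -x * T (x * q) i j) ?_ ?_ fun i j hij => ?_
      · have := hP n
        have := hne n
        simp only [hT, qPoch_succ, pow_zero]
        field_simp
      · have := hP n
        have := hne n
        simp only [hT, qPoch_succ, pow_succ, mul_pow, Nat.choose_succ_succ' n 1, pow_add,
          Nat.choose_one_right]
        field_simp
      · have := hP i
        have := hP j
        have := hne i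
        have := hne j
        subst hij
        simp only [hT, qPoch_succ, pow_succ, mul_pow, Nat.choose_succ_succ' i 1, pow_add,
          Nat.choose_one_right]
        field_simp
        ring
    rw [← mul_sum, sum_add_distrib, ← mul_sum, ih] at hrec
    apply mul_left_cancel₀ (hne n)
    have := hP n
    have := hne n
    rw [hrec, qPoch_succ_left, qPoch_succ]
    field_simp
    ring

theorem sum_eval_inv_pow_eq_zero (hq : q ≠ 0) (hq1 : ∀ m : ℕ, 1 ≤ m → q ^ m ≠ 1) {n : ℕ}
    {f : ℂ[X]} (hf : f.natDegree < n) :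
    ∑ p ∈ antidiagonal n, (-1) ^ p.1 * q ^ p.1.choose 2 * f.eval (q ^ p.1)⁻¹ /
      (qPoch q q p.1 * qPoch q q p.2) = 0 := by
  have hmonomial (d : ℕ) (hd : d < n) :
      ∑ p ∈ antidiagonal n, (-1) ^ p.1 * q ^ p.1.choose 2 * (q ^ d)⁻¹ ^ p.1 /
        (qPoch q q p.1 * qPoch q q p.2) = 0 := by
    rw [q_binomial hq1, qPoch_inv_pow_eq_zero hq hd, zero_div]
  calc _ = ∑ d ∈ range n, f.coeff d * ∑ p ∈ antidiagonal n,
          (-1) ^ p.1 * q ^ p.1.choose 2 * (q ^ d)⁻¹ ^ p.1 / (qPoch q q p.1 * qPoch q q p.2) := by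
        simp only [eval_eq_sum_range' hf, mul_sum, sum_div]
        rw [sum_comm]
        refine sum_congr rfl fun d _ => sum_congr rfl fun p _ => ?_
        rw [inv_pow, inv_pow, pow_right_comm]
        ring
    _ = 0 := sum_eq_zero fun d hd => by rw [hmonomial d (mem_range.mp hd), mul_zero]

/-- For `i + j = n`, the summand of the balanced series
`₃φ₂(A, B, q^{-n}; ABD, q^{1-n}/D; q, q)` of the q-Saalschütz summation, multiplied by
`(D;q)_n (ABD;q)_n / (q;q)_n` so that `A`, `B`, `D` do not enter any denominator. -/
noncomputable def qSaalschutzTerm (A B D q : ℂ) (i j : ℕ) : ℂ :=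
  qPoch A q i * qPoch B q i * qPoch D q j * qPoch (A * B * D * q ^ i) q j * D ^ i /
    (qPoch q q i * qPoch q q j)

theorem sum_qSaalschutzTerm_succ (hq1 : ∀ m : ℕ, 1 ≤ m → q ^ m ≠ 1) (A B D : ℂ) (n : ℕ) :
    (1 - q * q ^ n) * ∑ p ∈ antidiagonal (n + 1), qSaalschutzTerm A B D q p.1 p.2 =
      (1 - A * D * q ^ n) * (1 - B * D * q ^ n) *
        ∑ p ∈ antidiagonal n, qSaalschutzTerm A B D q p.1 p.2 := by
  have hP := qPoch_self_ne_zero hq1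
  have hne := one_sub_self_mul_pow_ne_zero hq1
  rw [mul_sum, mul_sum]
  trans ∑ p ∈ antidiagonal n,
    ((1 - D * q ^ p.2) * (1 - A * B * D * q ^ (2 * p.1 + p.2)) * qSaalschutzTerm A B D q p.1 p.2 +
      D * q ^ p.2 * (1 - A * q ^ p.1) * (1 - B * q ^ p.1) * qSaalschutzTerm A B D q p.1 p.2)
  · refine sum_antidiagonal_succ_of_pascal
      (F := fun i j => (1 - q * q ^ n) * qSaalschutzTerm A B D q i j)
      (P := fun i j =>
        (1 - D * q ^ j) * (1 - A * B * D * q ^ (2 * i + j)) * qSaalschutzTerm A B D q i j)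
      (S := fun i j =>
        D * q ^ j * (1 - A * q ^ i) * (1 - B * q ^ i) * qSaalschutzTerm A B D q i j)
      ?_ ?_ fun i j hij => ?_
    · have := hP n
      have := hne n
      simp only [qSaalschutzTerm, qPoch_succ, qPoch_zero]
      field_simp
      ring
    · have := hP n
      have := hne n
      simp only [qSaalschutzTerm, qPoch_succ, qPoch_zero]
      field_simp
      ring
    · have := hP i
      have := hP j
      have := hne i
      have := hne j
      have hshift : A * B * D * q ^ i * q = A * B * D * q ^ (i + 1) := by ring
      subst hij
      simp only [qSaalschutzTerm]
      rw [qPoch_succ_left (A * B * D * q ^ i), hshift]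
      simp only [qPoch_succ]
      generalize qPoch (A * B * D * q ^ (i + 1)) q j = Y
      field_simp
      ring
  · refine sum_congr rfl fun p hp => ?_
    rw [← HasAntidiagonal.mem_antidiagonal.mp hp]
    ring

theorem q_saalschutz (hq1 : ∀ m : ℕ, 1 ≤ m → q ^ m ≠ 1) (A B D : ℂ) (n : ℕ) :
    ∑ p ∈ antidiagonal n, qSaalschutzTerm A B D q p.1 p.2 =
      qPoch (A * D) q n * qPoch (B * D) q n / qPoch q q n := by
  induction n with
  | zero => simp [qSaalschutzTerm, qPoch_zero]
  | succ n ih =>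
    have := qPoch_self_ne_zero hq1 n
    have hne := one_sub_self_mul_pow_ne_zero hq1 n
    apply mul_left_cancel₀ hne
    rw [sum_qSaalschutzTerm_succ hq1, ih, qPoch_succ, qPoch_succ, qPoch_succ,
      mul_div_assoc', mul_div_assoc', div_eq_div_iff this (mul_ne_zero this hne)]
    ring

theorem cube_pow_ne_one (hq1 : ∀ m : ℕ, 1 ≤ m → q ^ m ≠ 1) (m : ℕ) (hm : 1 ≤ m) :
    (q ^ 3) ^ m ≠ 1 := by
  rw [← pow_mul]
  exact hq1 _ (by omega)

theorem exists_one_add_add_sq_eq_zero : ∃ ω : ℂ, 1 + ω + ω ^ 2 = 0 := by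
  have hω := Complex.isPrimitiveRoot_exp 3 three_ne_zero
  exact ⟨_, by simpa [sum_range_succ] using hω.geom_sum_eq_zero (by norm_num)⟩

theorem qPoch_cube_root_mul_inv_pow {ω : ℂ} (hω : 1 + ω + ω ^ 2 = 0) (hq : q ≠ 0)
    (hq1 : ∀ m : ℕ, 1 ≤ m → q ^ m ≠ 1) (k l : ℕ) :
    qPoch (ω * (q ^ (k + l))⁻¹) q k * qPoch (ω ^ 2 * (q ^ (k + l))⁻¹) q k *
        (q ^ (2 * (k + l) + 1)) ^ k * qPoch q q (k + l) * qPoch (q ^ 3) (q ^ 3) l =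
      qPoch (q ^ 3) (q ^ 3) (k + l) * qPoch q q l * q ^ (k ^ 2) := by
  have hbase := qPoch_inv_pow_mul hq k l
  have hcube := qPoch_inv_pow_mul (pow_ne_zero 3 hq) k l
  rw [pow_right_comm q 3, ← inv_pow, qPoch_cube hω] at hcube
  have hu : qPoch (q ^ (k + l))⁻¹ q k * q ^ (k * (k + l)) ≠ 0 := by
    refine left_ne_zero_of_mul (b := qPoch q q l) ?_
    rw [hbase]
    exact mul_ne_zero (mul_ne_zero (pow_ne_zero _ (neg_ne_zero.mpr one_ne_zero))
      (pow_ne_zero _ hq)) (qPoch_self_ne_zero hq1 _)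
  have hexp : q ^ (k ^ 2) = q ^ (2 * k.choose 2) * q ^ k := by
    rw [← pow_add, Nat.choose_two_right, Nat.mul_div_cancel' (Nat.even_mul_pred_self k).two_dvd]
    congr 1
    cases k with
    | zero => rfl
    | succ k => rw [Nat.add_sub_cancel]; ring
  apply mul_left_cancel₀ hu
  rw [hexp]
  generalize qPoch (q ^ (k + l))⁻¹ q k = u at *
  generalize qPoch (ω * (q ^ (k + l))⁻¹) q k = v at *
  generalize qPoch (ω ^ 2 * (q ^ (k + l))⁻¹) q k = w at *
  linear_combination q ^ k * qPoch q q (k + l) * hcube -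
    qPoch (q ^ 3) (q ^ 3) (k + l) * q ^ (2 * k.choose 2) * q ^ k * hbase

theorem cubic_expansion_term {ω : ℂ} (hω : 1 + ω + ω ^ 2 = 0) (hq : q ≠ 0)
    (hq1 : ∀ m : ℕ, 1 ≤ m → q ^ m ≠ 1) (b : ℂ) (k l : ℕ) :
    b ^ k * q ^ (k ^ 2) * qPoch (b * q ^ (k + 1)) q (k + 3 * l) /
        (qPoch q q k * qPoch (q ^ 3) (q ^ 3) l) =
      qPoch (b * q ^ (k + l + 1)) q (k + l) * qPoch q q (k + l) / qPoch (q ^ 3) (q ^ 3) (k + l) *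
        qSaalschutzTerm (ω * (q ^ (k + l))⁻¹) (ω ^ 2 * (q ^ (k + l))⁻¹)
          (b * q ^ (2 * (k + l) + 1)) q k l := by
  have hω3 : ω ^ 3 = 1 := by linear_combination (ω - 1) * hω
  have hroots := qPoch_cube_root_mul_inv_pow hω hq hq1 k l
  have hABD : ω * (q ^ (k + l))⁻¹ * (ω ^ 2 * (q ^ (k + l))⁻¹) * (b * q ^ (2 * (k + l) + 1)) *
      q ^ k = b * q ^ (k + 1) := by
    field_simp
    linear_combination b * q ^ (3 * k + 2 * l + 1) * hω3
  have hmiddle : b * q ^ (k + 1) * q ^ l = b * q ^ (k + l + 1) := by ring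
  have hlast : b * q ^ (k + 1) * q ^ (l + (k + l)) = b * q ^ (2 * (k + l) + 1) := by ring
  have hconcat : qPoch (b * q ^ (k + 1)) q (k + 3 * l) =
      qPoch (b * q ^ (k + 1)) q l * qPoch (b * q ^ (k + l + 1)) q (k + l) *
        qPoch (b * q ^ (2 * (k + l) + 1)) q l := by
    rw [show k + 3 * l = l + (k + l) + l by ring, qPoch_add, qPoch_add, hmiddle, hlast]
  rw [qSaalschutzTerm, hABD, hconcat, mul_pow b]
  have := qPoch_self_ne_zero hq1 k
  have := qPoch_self_ne_zero hq1 l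
  have := qPoch_self_ne_zero (cube_pow_ne_one hq1) l
  have := qPoch_self_ne_zero (cube_pow_ne_one hq1) (k + l)
  generalize q ^ (2 * (k + l) + 1) = Q at *
  generalize qPoch (ω * (q ^ (k + l))⁻¹) q k = v at *
  generalize qPoch (ω ^ 2 * (q ^ (k + l))⁻¹) q k = w at *
  field_simp
  linear_combination -b ^ k * qPoch (b * q ^ (k + 1)) q l *
    qPoch (b * q ^ (k + l + 1)) q (k + l) * qPoch (b * Q) q l * hroots

theorem sum_cubic_expansion (hq : q ≠ 0) (hq1 : ∀ m : ℕ, 1 ≤ m → q ^ m ≠ 1) (b : ℂ) (n : ℕ) :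
    ∑ p ∈ antidiagonal n, b ^ p.1 * q ^ (p.1 ^ 2) * qPoch (b * q ^ (p.1 + 1)) q (p.1 + 3 * p.2) /
        (qPoch q q p.1 * qPoch (q ^ 3) (q ^ 3) p.2) =
      qPoch ((b * q ^ (n + 1)) ^ 3) (q ^ 3) n / qPoch (q ^ 3) (q ^ 3) n := by
  obtain ⟨ω, hω⟩ := exists_one_add_add_sq_eq_zero
  have hn : qPoch q q n ≠ 0 := qPoch_self_ne_zero hq1 n
  have hcancel (c : ℂ) : c * (q ^ n)⁻¹ * (b * q ^ (2 * n + 1)) = c * (b * q ^ (n + 1)) := by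
    field_simp
    ring
  calc _ = ∑ p ∈ antidiagonal n,
          qPoch (b * q ^ (n + 1)) q n * qPoch q q n / qPoch (q ^ 3) (q ^ 3) n *
            qSaalschutzTerm (ω * (q ^ n)⁻¹) (ω ^ 2 * (q ^ n)⁻¹) (b * q ^ (2 * n + 1)) q
              p.1 p.2 := by
        refine sum_congr rfl fun p hp => ?_
        rw [cubic_expansion_term hω hq hq1, HasAntidiagonal.mem_antidiagonal.mp hp]
    _ = qPoch (b * q ^ (n + 1)) q n * qPoch q q n / qPoch (q ^ 3) (q ^ 3) n *
          (qPoch (ω * (b * q ^ (n + 1))) q n * qPoch (ω ^ 2 * (b * q ^ (n + 1))) q n /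
            qPoch q q n) := by
        rw [← mul_sum, q_saalschutz hq1, hcancel, hcancel]
    _ = _ := by
        rw [qPoch_cube hω (b * q ^ (n + 1))]
        field_simp

theorem sum_qPoch_mul_qPoch_eq_zero (hq : q ≠ 0) (hq1 : ∀ m : ℕ, 1 ≤ m → q ^ m ≠ 1)
    (x : ℂ) (j m : ℕ) :
    ∑ p ∈ antidiagonal (m + 1), (-1) ^ p.1 * (q ^ 3) ^ p.1.choose 2 *
        (qPoch (x * q ^ (j + 2 * (m + 1))) q⁻¹ (3 * p.1) * qPoch x q (j + 3 * p.2)) /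
      (qPoch (q ^ 3) (q ^ 3) p.1 * qPoch (q ^ 3) (q ^ 3) p.2) = 0 := by
  set y : ℂ := x * q ^ (j + 2 * (m + 1) + 1)
  set f : ℂ[X] := ∏ i ∈ range m, (1 - C (y * q ^ i) * X) with hf
  have hdeg : f.natDegree < m + 1 := by
    refine Nat.lt_succ_of_le ((natDegree_prod_le _ _).trans ?_)
    refine (sum_le_card_nsmul _ _ 1 fun i _ => ?_).trans (by simp)
    compute_degree
  have heval (k : ℕ) : f.eval ((q ^ 3) ^ k)⁻¹ = qPoch (y / q ^ (3 * k)) q m := by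
    simp only [hf, eval_prod, qPoch, eval_sub, eval_one, eval_mul, eval_C, eval_X]
    refine prod_congr rfl fun i _ => ?_
    rw [← pow_mul]
    ring
  have hswap (k l : ℕ) (hkl : k + l = m + 1) :
      qPoch (x * q ^ (j + 2 * (m + 1))) q⁻¹ (3 * k) * qPoch x q (j + 3 * l) =
        qPoch x q (j + 2 * (m + 1) + 1) * f.eval ((q ^ 3) ^ k)⁻¹ := by
    rw [qPoch_inv_base hq, heval, mul_assoc x, ← pow_succ]
    exact qPoch_mul_qPoch_swap hq (div_mul_cancel₀ _ (pow_ne_zero _ hq)) (by omega)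
  calc _ = qPoch x q (j + 2 * (m + 1) + 1) * ∑ p ∈ antidiagonal (m + 1),
          (-1) ^ p.1 * (q ^ 3) ^ p.1.choose 2 * f.eval ((q ^ 3) ^ p.1)⁻¹ /
            (qPoch (q ^ 3) (q ^ 3) p.1 * qPoch (q ^ 3) (q ^ 3) p.2) := by
        rw [mul_sum]
        refine sum_congr rfl fun p hp => ?_
        rw [hswap p.1 p.2 (HasAntidiagonal.mem_antidiagonal.mp hp)]
        ring
    _ = 0 := by
        rw [sum_eval_inv_pow_eq_zero (pow_ne_zero 3 hq) (cube_pow_ne_one hq1) hdeg, mul_zero]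

theorem cubic_summation (hq : q ≠ 0) (hq1 : ∀ m : ℕ, 1 ≤ m → q ^ m ≠ 1) (b : ℂ) (n : ℕ) :
    ∑ p ∈ antidiagonal n, (-1) ^ p.1 * (q ^ 3) ^ p.1.choose 2 *
        qPoch (b * q ^ (2 * n + 1)) q⁻¹ (3 * p.1) * qPoch ((b * q ^ (p.2 + 1)) ^ 3) (q ^ 3) p.2 /
      (qPoch (q ^ 3) (q ^ 3) p.1 * qPoch (q ^ 3) (q ^ 3) p.2) =
    b ^ n * q ^ (n ^ 2) * qPoch (b * q ^ (n + 1)) q n / qPoch q q n := by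
  set w : ℕ → ℂ := fun k =>
    (-1) ^ k * (q ^ 3) ^ k.choose 2 * qPoch (b * q ^ (2 * n + 1)) q⁻¹ (3 * k) with hw
  set c : ℕ → ℂ := fun j => b ^ j * q ^ (j ^ 2) / qPoch q q j with hc
  set g : ℕ → ℕ → ℂ := fun j m => ∑ s ∈ antidiagonal m,
    w s.1 * qPoch (b * q ^ (j + 1)) q (j + 3 * s.2) /
      (qPoch (q ^ 3) (q ^ 3) s.1 * qPoch (q ^ 3) (q ^ 3) s.2) with hg
  have hvanish (j m : ℕ) (hjm : j + (m + 1) = n) : g j (m + 1) = 0 := by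
    rw [← sum_qPoch_mul_qPoch_eq_zero hq hq1 (b * q ^ (j + 1)) j m]
    refine sum_congr rfl fun s _ => ?_
    have hx : b * q ^ (j + 1) * q ^ (j + 2 * (m + 1)) = b * q ^ (2 * n + 1) := by
      rw [← hjm]; ring
    rw [hx, hw]
    ring
  calc _ = ∑ p ∈ antidiagonal n, ∑ s ∈ antidiagonal p.2, w p.1 * (c s.1 *
          qPoch (b * q ^ (s.1 + 1)) q (s.1 + 3 * s.2)) /
            (qPoch (q ^ 3) (q ^ 3) p.1 * qPoch (q ^ 3) (q ^ 3) s.2) := by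
        refine sum_congr rfl fun p _ => ?_
        rw [mul_div_mul_comm, ← sum_cubic_expansion hq hq1, mul_sum]
        refine sum_congr rfl fun s _ => ?_
        ring
    _ = ∑ p ∈ antidiagonal n, c p.1 * g p.1 p.2 := by
        rw [sum_antidiagonal_left_comm (fun k j l => w k * (c j *
          qPoch (b * q ^ (j + 1)) q (j + 3 * l)) /
            (qPoch (q ^ 3) (q ^ 3) k * qPoch (q ^ 3) (q ^ 3) l))]
        refine sum_congr rfl fun p _ => ?_
        rw [mul_sum]
        refine sum_congr rfl fun s _ => ?_
        ring
    _ = c n * g n 0 := by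
        refine sum_eq_single_of_mem (n, 0) (by simp) fun p hp hne => ?_
        obtain ⟨j, m⟩ := p
        rw [HasAntidiagonal.mem_antidiagonal] at hp
        cases m with
        | zero => exact absurd (by rw [← hp, add_zero]) hne
        | succ m => rw [hvanish j m hp, mul_zero]
    _ = _ := by
        simp only [hc, hg, hw, Nat.antidiagonal_zero, sum_singleton, qPoch_zero, mul_zero,
          Nat.choose_zero_succ, pow_zero, add_zero, mul_one, one_mul, div_one]
        ring

theorem isBaileyPair_iff_antidiagonal {a : ℂ} {α β : ℕ → ℂ} :
    IsBaileyPair a q α β ↔ ∀ n, β n = ∑ p ∈ antidiagonal n,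
      α p.1 / (qPoch q q p.2 * qPoch (a * q) q (2 * p.1 + p.2)) := by
  refine forall_congr' fun n => ?_
  rw [Nat.sum_antidiagonal_eq_sum_range_succ
    (fun r m => α r / (qPoch q q m * qPoch (a * q) q (2 * r + m)))]
  refine Eq.congr_right (sum_congr rfl fun r hr => ?_)
  rw [mem_range] at hr
  rw [show 2 * r + (n - r) = n + r by omega]

theorem sum_baseChange_kernel (hq : q ≠ 0) (hq1 : ∀ m : ℕ, 1 ≤ m → q ^ m ≠ 1) {a : ℂ}
    (ha1 : ∀ m : ℕ, 1 ≤ m → a * q ^ m ≠ 1) (ha3 : ∀ m : ℕ, 1 ≤ m → a ^ 3 * q ^ (3 * m) ≠ 1)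
    (r n : ℕ) :
    ∑ p ∈ antidiagonal n, (-1) ^ p.1 * (q ^ 3) ^ p.1.choose 2 *
        qPoch (a * q ^ (2 * (r + n) + 1)) q⁻¹ (3 * p.1) *
        qPoch (a ^ 3 * q ^ 3) (q ^ 3) (2 * (r + p.2)) /
      (qPoch (q ^ 3) (q ^ 3) p.1 *
        (qPoch (q ^ 3) (q ^ 3) p.2 * qPoch (a ^ 3 * q ^ 3) (q ^ 3) (2 * r + p.2))) =
    a ^ n * q ^ (n ^ 2 + 2 * r * n) * qPoch (a * q) q (2 * (r + n)) /
      (qPoch q q n * qPoch (a * q) q (2 * r + n)) := by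
  have hA : qPoch (a * q) q (2 * r + n) ≠ 0 := qPoch_mul_self_ne_zero ha1 _
  have hA3 (l : ℕ) : qPoch (a ^ 3 * q ^ 3) (q ^ 3) (2 * r + l) ≠ 0 :=
    qPoch_mul_self_ne_zero (fun m hm => by rw [← pow_mul]; exact ha3 m hm) _
  have hnum (l : ℕ) : qPoch (a ^ 3 * q ^ 3) (q ^ 3) (2 * (r + l)) =
      qPoch (a ^ 3 * q ^ 3) (q ^ 3) (2 * r + l) *
        qPoch ((a * q ^ (2 * r) * q ^ (l + 1)) ^ 3) (q ^ 3) l := by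
    rw [show 2 * (r + l) = 2 * r + l + l by ring, qPoch_add]
    congr 2
    ring
  have hrhs : qPoch (a * q) q (2 * (r + n)) =
      qPoch (a * q) q (2 * r + n) * qPoch (a * q ^ (2 * r) * q ^ (n + 1)) q n := by
    rw [show 2 * (r + n) = 2 * r + n + n by ring, qPoch_add]
    congr 2
    ring
  have hsum := cubic_summation hq hq1 (a * q ^ (2 * r)) n
  have hx : a * q ^ (2 * r) * q ^ (2 * n + 1) = a * q ^ (2 * (r + n) + 1) := by ring
  rw [hx] at hsum
  trans (a * q ^ (2 * r)) ^ n * q ^ (n ^ 2) *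
    qPoch (a * q ^ (2 * r) * q ^ (n + 1)) q n / qPoch q q n
  · rw [← hsum]
    refine sum_congr rfl fun p _ => ?_
    rw [hnum, ← mul_assoc (qPoch (q ^ 3) (q ^ 3) p.1), mul_comm (qPoch (a ^ 3 * q ^ 3) _ _),
      ← mul_assoc, mul_div_mul_right _ _ (hA3 p.2)]
  · rw [hrhs, mul_comm (qPoch q q n), mul_left_comm, mul_div_mul_left _ _ hA]
    ring

theorem IsBaileyPair.sum_baseChange {a : ℂ} {α β : ℕ → ℂ}
    (hpair : IsBaileyPair (a ^ 3) (q ^ 3) α β) (hq : q ≠ 0) (hq1 : ∀ m : ℕ, 1 ≤ m → q ^ m ≠ 1)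
    (ha1 : ∀ m : ℕ, 1 ≤ m → a * q ^ m ≠ 1) (ha3 : ∀ m : ℕ, 1 ≤ m → a ^ 3 * q ^ (3 * m) ≠ 1)
    (n : ℕ) :
    ∑ p ∈ antidiagonal n, (-1) ^ p.1 * (q ^ 3) ^ p.1.choose 2 *
        qPoch (a * q ^ (2 * n + 1)) q⁻¹ (3 * p.1) * qPoch (a ^ 3 * q ^ 3) (q ^ 3) (2 * p.2) /
        qPoch (q ^ 3) (q ^ 3) p.1 * β p.2 =
      qPoch (a * q) q (2 * n) * ∑ p ∈ antidiagonal n, a ^ p.2 * q ^ (p.2 ^ 2 + 2 * p.1 * p.2) *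
        α p.1 / (qPoch q q p.2 * qPoch (a * q) q (2 * p.1 + p.2)) := by
  rw [isBaileyPair_iff_antidiagonal] at hpair
  set F : ℕ → ℕ → ℕ → ℂ := fun k r l => α r * ((-1) ^ k * (q ^ 3) ^ k.choose 2 *
    qPoch (a * q ^ (2 * n + 1)) q⁻¹ (3 * k) * qPoch (a ^ 3 * q ^ 3) (q ^ 3) (2 * (r + l)) /
    (qPoch (q ^ 3) (q ^ 3) k *
      (qPoch (q ^ 3) (q ^ 3) l * qPoch (a ^ 3 * q ^ 3) (q ^ 3) (2 * r + l)))) with hF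
  calc _ = ∑ p ∈ antidiagonal n, ∑ s ∈ antidiagonal p.2, F p.1 s.1 s.2 := by
        refine sum_congr rfl fun p _ => ?_
        rw [hpair, mul_sum]
        refine sum_congr rfl fun s hs => ?_
        rw [← HasAntidiagonal.mem_antidiagonal.mp hs, hF]
        ring
    _ = ∑ p ∈ antidiagonal n, ∑ s ∈ antidiagonal p.2, F s.1 p.1 s.2 :=
        sum_antidiagonal_left_comm F n
    _ = _ := by
        rw [mul_sum]
        refine sum_congr rfl fun p hp => ?_
        have hkernel := sum_baseChange_kernel hq hq1 ha1 ha3 p.1 p.2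
        rw [HasAntidiagonal.mem_antidiagonal.mp hp] at hkernel
        rw [← mul_sum, hkernel]
        ring

theorem prod_one_sub_mul_zpow_sub (hq : q ≠ 0) (a : ℂ) (s l : ℕ) :
    ∏ j ∈ range l, (1 - a * q ^ ((s : ℤ) - (j : ℤ))) = qPoch (a * q ^ s) q⁻¹ l := by
  refine prod_congr rfl fun j _ => ?_
  rw [zpow_sub₀ hq, zpow_natCast, zpow_natCast, inv_pow, mul_assoc, div_eq_mul_inv]

theorem sum_range_eq_sum_antidiagonal_baseChange (hq : q ≠ 0) (a : ℂ) (β : ℕ → ℂ) (n : ℕ) :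
    ∑ k ∈ range (n + 1), (∏ j ∈ range (3 * k), (1 - a * q ^ (2 * (n : ℤ) + 1 - (j : ℤ)))) *
        qPoch (a ^ 3 * q ^ 3) (q ^ 3) (2 * (n - k)) / qPoch (q ^ 3) (q ^ 3) k * (-1) ^ k *
        q ^ ((3 * (k * (k - 1) / 2 : ℕ) : ℤ) - (n : ℤ) ^ 2) * a ^ (-(n : ℤ)) * β (n - k) =
      (a ^ n * q ^ (n ^ 2))⁻¹ * ∑ p ∈ antidiagonal n, (-1) ^ p.1 * (q ^ 3) ^ p.1.choose 2 *
        qPoch (a * q ^ (2 * n + 1)) q⁻¹ (3 * p.1) * qPoch (a ^ 3 * q ^ 3) (q ^ 3) (2 * p.2) /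
        qPoch (q ^ 3) (q ^ 3) p.1 * β p.2 := by
  rw [Nat.sum_antidiagonal_eq_sum_range_succ (fun k l => (-1) ^ k * (q ^ 3) ^ k.choose 2 *
    qPoch (a * q ^ (2 * n + 1)) q⁻¹ (3 * k) * qPoch (a ^ 3 * q ^ 3) (q ^ 3) (2 * l) /
    qPoch (q ^ 3) (q ^ 3) k * β l), mul_sum]
  refine sum_congr rfl fun k _ => ?_
  have hprod := prod_one_sub_mul_zpow_sub hq a (2 * n + 1) (3 * k)
  have hpow : q ^ ((3 * (k * (k - 1) / 2 : ℕ) : ℤ) - (n : ℤ) ^ 2) =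
      (q ^ 3) ^ k.choose 2 * (q ^ (n ^ 2))⁻¹ := by
    rw [← Nat.choose_two_right, zpow_sub₀ hq, div_eq_mul_inv, ← pow_mul]
    norm_cast
  push_cast at hprod
  rw [hprod, hpow, zpow_neg, zpow_natCast]
  ring

theorem inv_mul_baseChange_weight {a : ℂ} (hq : q ≠ 0) (ha : a ≠ 0) (r m : ℕ) :
    (a ^ (r + m) * q ^ ((r + m) ^ 2))⁻¹ * (a ^ m * q ^ (m ^ 2 + 2 * r * m)) =
      a ^ (-(r : ℤ)) * q ^ (-((r : ℤ) ^ 2)) := by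
  rw [zpow_neg, zpow_neg, zpow_natCast, ← Nat.cast_pow, zpow_natCast]
  field_simp
  ring

end

/-- Theorem 2.4: base change from `(a³, q³)` to `(a, q)`.
Here `(a q^{2n+1}; q^{-1})_{3k} = ∏_{j=0}^{3k-1} (1 - a q^{2n+1-j})` is written with
integer powers of `q`. -/
theorem bailey_base_change_thm24 (q a : ℂ)
    (hq : q ≠ 0) (ha : a ≠ 0)
    (hq1 : ∀ m : ℕ, 1 ≤ m → q ^ m ≠ 1)
    (ha1 : ∀ m : ℕ, 1 ≤ m → a * q ^ m ≠ 1)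
    (ha3 : ∀ m : ℕ, 1 ≤ m → a ^ 3 * q ^ (3 * m) ≠ 1)
    (α β : ℕ → ℂ)
    (hpair : IsBaileyPair (a ^ 3) (q ^ 3) α β) :
    IsBaileyPair a q
      (fun r => a ^ (-(r : ℤ)) * q ^ (-((r : ℤ) ^ 2)) * α r)
      (fun n => (1 / qPoch (a * q) q (2 * n)) *
        ∑ k ∈ Finset.range (n + 1),
          (∏ j ∈ Finset.range (3 * k), (1 - a * q ^ (2 * (n : ℤ) + 1 - (j : ℤ)))) *
              qPoch (a ^ 3 * q ^ 3) (q ^ 3) (2 * (n - k)) / qPoch (q ^ 3) (q ^ 3) k *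
            (-1) ^ k * q ^ ((3 * (k * (k - 1) / 2 : ℕ) : ℤ) - (n : ℤ) ^ 2) *
            a ^ (-(n : ℤ)) * β (n - k)) := by
  rw [isBaileyPair_iff_antidiagonal]
  intro n
  have hA : qPoch (a * q) q (2 * n) ≠ 0 := qPoch_mul_self_ne_zero ha1 _
  rw [sum_range_eq_sum_antidiagonal_baseChange hq, hpair.sum_baseChange hq hq1 ha1 ha3,
    mul_left_comm, one_div, inv_mul_cancel_left₀ hA, Finset.mul_sum]
  refine Finset.sum_congr rfl fun p hp => ?_
  rw [← inv_mul_baseChange_weight hq ha p.1 p.2, Finset.HasAntidiagonal.mem_antidiagonal.mp hp]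
  ring
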